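/- Under the standing assumptions, assume further x ≤ 80, and let d > 1 be a divisor of m whose least prime divisor is at least 173. Then log ∏_{p} (1 + 1/(p − 1)) < 0.032, where the product (taken in the real numbers) runs over the odd primes p with p ∤ x₁·y₁ and ℓ_p = d. -/

import Mathlib

/-- `ellp a b p` is the least positive integer `ℓ` such that `p ∣ a ^ ℓ - b ^ ℓ`
(and `0` if no such integer exists). -/
noncomputable def ellp (a b p : ℕ) : ℕ := sInf {ℓ : ℕ | 0 < ℓ ∧ p ∣ a ^ ℓ - b ^ ℓ}

/-!
A prime `p` counted by `ℓ_p = d` has `a / b` of order exactly `d` modulo `p`, so `d ∣ p - 1`; as `p`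
and `d` are odd, `p = 2dj + 1` with `j ≥ 1`. If `a ≤ 2d + 1`, then there are at most `d` such
primes, since all of them divide `a ^ d - b ^ d ≤ (2d + 1) ^ d`. The logarithm of the product is
therefore at most `∑_{j ≤ d} 1 / (2dj) ≤ (1 + log d) / (2d)`.
-/

lemma sum_le_sum_range_card_of_antitone {M : Type*} [AddCommMonoid M] [PartialOrder M]
    [IsOrderedAddMonoid M] {f : ℕ → M} (hf : Antitone f) (T : Finset ℕ) :
    ∑ j ∈ T, f j ≤ ∑ i ∈ Finset.range T.card, f i := by
  induction T using Finset.induction_on_max with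
  | empty => simp
  | insert m T hm ih =>
    have hmT : m ∉ T := fun h ↦ (hm m h).false
    have hcard : T.card ≤ m := by
      simpa using Finset.card_le_card fun j hj ↦ Finset.mem_range.mpr (hm j hj)
    rw [Finset.sum_insert hmT, Finset.card_insert_of_notMem hmT, Finset.sum_range_succ, add_comm]
    exact add_le_add ih (hf hcard)

lemma sum_one_div_succ_le_harmonic {T : Finset ℕ} {k : ℕ} (hT : T.card ≤ k) :
    ∑ j ∈ T, 1 / ((j : ℝ) + 1) ≤ harmonic k := by
  calc ∑ j ∈ T, 1 / ((j : ℝ) + 1)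
      ≤ ∑ i ∈ Finset.range T.card, 1 / ((i : ℝ) + 1) :=
        sum_le_sum_range_card_of_antitone (fun _ _ h ↦ Nat.one_div_le_one_div h) T
    _ ≤ ∑ i ∈ Finset.range k, 1 / ((i : ℝ) + 1) :=
        Finset.sum_le_sum_of_subset_of_nonneg (Finset.range_mono hT) fun _ _ _ ↦ by positivity
    _ = harmonic k := by simp [harmonic]

lemma sum_one_div_sub_one_le_harmonic_div {S : Finset ℕ} {N k : ℕ} (hN : 0 < N)
    (hS : ∀ q ∈ S, 1 < q ∧ N ∣ q - 1) (hcard : S.card ≤ k) :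
    ∑ q ∈ S, 1 / ((q : ℝ) - 1) ≤ harmonic k / N := by
  have hinj : Function.Injective fun j : ℕ ↦ N * (j + 1) + 1 := fun i j h ↦ by
    simpa [hN.ne'] using h
  have hrange : (S : Set ℕ) ⊆ (fun j : ℕ ↦ N * (j + 1) + 1) '' Set.univ := fun q hq ↦ by
    obtain ⟨hq1, c, hc⟩ := hS q hq
    obtain ⟨j, rfl⟩ : ∃ j, c = j + 1 := Nat.exists_eq_succ_of_ne_zero (by rintro rfl; omega)
    exact ⟨j, trivial, by dsimp only; omega⟩
  obtain ⟨T, -, rfl⟩ := Finset.subset_set_image_iff.mp hrange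
  rw [Finset.card_image_of_injective T hinj] at hcard
  calc ∑ q ∈ T.image (fun j ↦ N * (j + 1) + 1), 1 / ((q : ℝ) - 1)
      = (∑ j ∈ T, 1 / ((j : ℝ) + 1)) / N := by
        rw [Finset.sum_image hinj.injOn, Finset.sum_div]
        refine Finset.sum_congr rfl fun j _ ↦ ?_
        push_cast
        rw [add_sub_cancel_right, div_div, mul_comm]
    _ ≤ harmonic k / N := by gcongr; exact sum_one_div_succ_le_harmonic hcard

lemma log_prod_one_add_le_sum {ι : Type*} {s : Finset ι} {f : ι → ℝ} (hf : ∀ i ∈ s, -1 < f i) :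
    Real.log (∏ i ∈ s, (1 + f i)) ≤ ∑ i ∈ s, f i := by
  have hpos : ∀ i ∈ s, 0 < 1 + f i := fun i hi ↦ by linarith [hf i hi]
  rw [Real.log_prod fun i hi ↦ (hpos i hi).ne']
  exact Finset.sum_le_sum fun i hi ↦ by linarith [Real.log_le_sub_one_of_pos (hpos i hi)]

lemma one_add_log_div_two_mul_lt {t : ℝ} (ht : 86 ≤ t) :
    (1 + Real.log t) / (2 * t) < 0.032 := by
  have hlog : Real.log t ≤ 6 * Real.log 2 + t / 64 - 1 := by
    have h := Real.log_le_sub_one_of_pos (x := t / 64) (by positivity)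
    rw [Real.log_div (by positivity) (by norm_num), show (64 : ℝ) = 2 ^ 6 by norm_num,
      Real.log_pow] at h
    norm_num at h
    linarith
  rw [div_lt_iff₀ (by positivity)]
  linarith [Real.log_two_lt_d9]

lemma card_le_of_prime_dvd {S : Finset ℕ} {A B k : ℕ} (hB : 1 < B) (hA : 0 < A) (hAB : A ≤ B ^ k)
    (hS : ∀ p ∈ S, p.Prime ∧ B ≤ p ∧ p ∣ A) : S.card ≤ k := by
  have hdvd : ∏ p ∈ S, p ∣ A :=
    Finset.prod_primes_dvd A (fun p hp ↦ (hS p hp).1.prime) fun p hp ↦ (hS p hp).2.2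
  refine (Nat.pow_le_pow_iff_right hB).mp ?_
  calc B ^ S.card ≤ ∏ p ∈ S, p := S.pow_card_le_prod _ _ fun p hp ↦ (hS p hp).2.1
    _ ≤ A := Nat.le_of_dvd hA hdvd
    _ ≤ B ^ k := hAB

lemma orderOf_eq_sInf {G : Type*} [Monoid G] (u : G) :
    orderOf u = sInf {l : ℕ | 0 < l ∧ u ^ l = 1} := by
  rcases (orderOf u).eq_zero_or_pos with h | h
  · have hempty : {l : ℕ | 0 < l ∧ u ^ l = 1} = ∅ :=
      Set.eq_empty_of_forall_notMem fun l hl ↦ orderOf_eq_zero_iff'.mp h l hl.1 hl.2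
    rw [hempty, Nat.sInf_empty, h]
  · have hleast : IsLeast {l : ℕ | 0 < l ∧ u ^ l = 1} (orderOf u) :=
      ⟨⟨h, pow_orderOf_eq_one u⟩, fun l hl ↦ orderOf_le_of_pow_eq_one hl.1 hl.2⟩
    exact hleast.csInf_eq.symm

lemma dvd_pow_ellp_sub_pow_ellp (a b p : ℕ) : p ∣ a ^ ellp a b p - b ^ ellp a b p := by
  rcases {l : ℕ | 0 < l ∧ p ∣ a ^ l - b ^ l}.eq_empty_or_nonempty with h | h
  · simp [ellp, h]
  · exact (Nat.sInf_mem h).2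

section PrimeModulus

variable {a b p : ℕ} [Fact p.Prime]

lemma dvd_pow_sub_pow_iff_div_pow_eq_one (hba : b ≤ a) (hpb : ¬ p ∣ b) (l : ℕ) :
    p ∣ a ^ l - b ^ l ↔ ((a : ZMod p) / b) ^ l = 1 := by
  have hb : (b : ZMod p) ≠ 0 := by rwa [Ne, ZMod.natCast_eq_zero_iff]
  rw [← ZMod.natCast_eq_zero_iff, Nat.cast_sub (Nat.pow_le_pow_left hba l), sub_eq_zero, div_pow,
    div_eq_one_iff_eq (pow_ne_zero l hb), Nat.cast_pow, Nat.cast_pow]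

lemma ellp_eq_orderOf (hba : b ≤ a) (hpb : ¬ p ∣ b) :
    ellp a b p = orderOf ((a : ZMod p) / b) := by
  simp only [ellp, dvd_pow_sub_pow_iff_div_pow_eq_one hba hpb, orderOf_eq_sInf]

lemma ellp_dvd_sub_one (hba : b ≤ a) (hpab : ¬ p ∣ a * b) : ellp a b p ∣ p - 1 := by
  have hpa : (a : ZMod p) ≠ 0 := by
    rw [Ne, ZMod.natCast_eq_zero_iff]
    exact fun h ↦ hpab (h.mul_right b)
  have hpb : ¬ p ∣ b := fun h ↦ hpab (h.mul_left a)
  have hb : (b : ZMod p) ≠ 0 := by rwa [Ne, ZMod.natCast_eq_zero_iff]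
  rw [ellp_eq_orderOf hba hpb]
  exact ZMod.orderOf_dvd_card_sub_one (div_ne_zero hpa hb)

lemma two_mul_ellp_dvd_sub_one (hba : b ≤ a) (hp : Odd p) (hpab : ¬ p ∣ a * b)
    (hl : Odd (ellp a b p)) : 2 * ellp a b p ∣ p - 1 :=
  (Nat.coprime_two_left.mpr hl).mul_dvd_of_dvd_of_dvd (Nat.Odd.sub_odd hp odd_one).two_dvd
    (ellp_dvd_sub_one hba hpab)

end PrimeModulus

lemma log_prod_le_one_add_log_div {a b d : ℕ} (hba : b < a) (hd : Odd d) (had : a ≤ 2 * d + 1)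
    {S : Finset ℕ} (hS : ∀ p ∈ S, p.Prime ∧ Odd p ∧ ¬ p ∣ a * b ∧ ellp a b p = d) :
    Real.log (∏ p ∈ S, (1 + 1 / ((p : ℝ) - 1))) ≤ (1 + Real.log d) / (2 * d) := by
  have hmod : ∀ p ∈ S, 1 < p ∧ 2 * d ∣ p - 1 := fun p hp ↦ by
    obtain ⟨hprime, hodd, hpab, rfl⟩ := hS p hp
    have : Fact p.Prime := ⟨hprime⟩
    exact ⟨hprime.one_lt, two_mul_ellp_dvd_sub_one hba.le hodd hpab hd⟩
  have hcard : S.card ≤ d := by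
    refine card_le_of_prime_dvd (A := a ^ d - b ^ d) (B := 2 * d + 1) (by have := hd.pos; omega)
      (Nat.sub_pos_of_lt (Nat.pow_lt_pow_left hba hd.pos.ne'))
      ((Nat.sub_le _ _).trans (Nat.pow_le_pow_left had d)) fun p hp ↦ ?_
    obtain ⟨hp1, hdvd⟩ := hmod p hp
    have hle : 2 * d ≤ p - 1 := Nat.le_of_dvd (by omega) hdvd
    obtain ⟨hprime, -, -, rfl⟩ := hS p hp
    exact ⟨hprime, by omega, dvd_pow_ellp_sub_pow_ellp a b p⟩
  calc Real.log (∏ p ∈ S, (1 + 1 / ((p : ℝ) - 1)))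
      ≤ ∑ p ∈ S, 1 / ((p : ℝ) - 1) := log_prod_one_add_le_sum fun p hp ↦
        neg_one_lt_zero.trans (one_div_pos.mpr (sub_pos.mpr (mod_cast (hmod p hp).1)))
    _ ≤ harmonic d / (2 * d : ℕ) :=
        sum_one_div_sub_one_le_harmonic_div (mul_pos two_pos hd.pos) hmod hcard
    _ ≤ (1 + Real.log d) / (2 * d) := by
        push_cast
        gcongr
        exact harmonic_le_one_add_log d

theorem log_prod_lt_of_minFac_ge_173_general {a b d : ℕ} (hba : b < a) (hd : Odd d)
    (hd86 : 86 ≤ d) (had : a ≤ 2 * d + 1) {S : Finset ℕ}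
    (hS : ∀ p ∈ S, p.Prime ∧ Odd p ∧ ¬ p ∣ a * b ∧ ellp a b p = d) :
    Real.log (∏ p ∈ S, (1 + 1 / ((p : ℝ) - 1))) < 0.032 :=
  (log_prod_le_one_add_log_div hba hd had hS).trans_lt
    (one_add_log_div_two_mul_lt (mod_cast hd86))

theorem log_prod_lt_of_minFac_ge_173 (x y z m n : ℕ) (hx : 0 < x) (hy : 0 < y) (hz : 0 < z)
    (hm : 0 < m) (hn : 0 < n) (hxy : y < x) (hzxy : z ≤ x - y)
    (hgcd : Nat.gcd m n = 1) (hmn : n < m)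
    (heq : Nat.totient (z * ((x ^ m - y ^ m) / (x - y))) =
      z * ((x ^ n - y ^ n) / (x - y)))
    (hx80 : x ≤ 80)
    (d₁ x₁ y₁ : ℕ) (hd₁ : d₁ = Nat.gcd x y) (hx₁ : x₁ = x / d₁) (hy₁ : y₁ = y / d₁)
    (d : ℕ) (hd : d ∣ m) (hd1 : 1 < d) (hd173 : 173 ≤ d.minFac) :
    Real.log (∏ p ∈ (Finset.range (x₁ ^ d - y₁ ^ d + 1)).filter
        (fun p => p.Prime ∧ Odd p ∧ ¬ p ∣ x₁ * y₁ ∧ ellp x₁ y₁ p = d),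
      (1 + 1 / ((p : ℝ) - 1))) < 0.032 := by
  subst hd₁ hx₁ hy₁
  have hlt : y / x.gcd y < x / x.gcd y := Nat.div_lt_div_of_lt_of_dvd (Nat.gcd_dvd_left x y) hxy
  have hodd : Odd d := Nat.not_even_iff_odd.mp fun h ↦ by
    have := Nat.minFac_le_of_dvd le_rfl h.two_dvd
    omega
  have hd_ge : 173 ≤ d := hd173.trans (Nat.minFac_le (by omega))
  have hx_le : x / x.gcd y ≤ 80 := (Nat.div_le_self _ _).trans hx80
  exact log_prod_lt_of_minFac_ge_173_general hlt hodd (by omega) (by omega)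
    fun p hp ↦ (Finset.mem_filter.mp hp).2
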